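/- Let p_n/q_n be the n-th continued fraction convergent of π, let v₂ = v₂(p_n) be the 2-adic valuation of p_n, and set x_n = ((2^(2+2v₂) + 1)/2^(2+2v₂))·π·p_n. Then there is a constant c > 0 such that |cos((2x_n + 1)·p_n)| ≤ c/q_n for all n ≥ 1. -/

import Mathlib

open Real

/-!
Write `p = 2 ^ v * m` with `m` odd. Since `m ^ 2 ≡ 1 [MOD 4]`, the factor
`1 + 1 / 2 ^ (2 + 2 * v)` in `x` turns `2 * x * p` into an integer multiple of `π` plus `π / 2`.
Hence `|cos ((2 * x + 1) * p)| = |sin p| = |sin (p - q * π)| ≤ |p - q * π| ≤ 1 / q`.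
-/

section ContinuedFraction

variable {K : Type*} [Field K] [LinearOrder K] [IsStrictOrderedRing K] [FloorRing K]

lemma one_le_dens_of (v : K) (n : ℕ) : 1 ≤ (GenContFract.of v).dens n := by
  have dens_mono : Monotone (GenContFract.of v).dens :=
    monotone_nat_of_le_succ fun _ => GenContFract.of_den_mono
  simpa only [GenContFract.zeroth_den_eq_one] using dens_mono n.zero_le

lemma abs_sub_convs_of_le (v : K) (n : ℕ) :
    |v - (GenContFract.of v).convs n| ≤
      1 / ((GenContFract.of v).dens n * (GenContFract.of v).dens (n + 1)) := by
  by_cases terminated : (GenContFract.of v).TerminatedAt n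
  · rw [← GenContFract.of_correctness_of_terminatedAt terminated, sub_self, abs_zero]
    exact one_div_nonneg.mpr
      (mul_nonneg GenContFract.zero_le_of_den GenContFract.zero_le_of_den)
  · exact GenContFract.abs_sub_convs_le terminated

lemma abs_nums_sub_dens_mul_of_le_one_div_dens_succ (v : K) (n : ℕ) :
    |(GenContFract.of v).nums n - (GenContFract.of v).dens n * v| ≤
      1 / (GenContFract.of v).dens (n + 1) := by
  have dens_pos : 0 < (GenContFract.of v).dens n := one_pos.trans_le (one_le_dens_of v n)
  have error_bound := abs_sub_convs_of_le v n
  rw [GenContFract.conv_eq_num_div_den] at error_bound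
  calc |(GenContFract.of v).nums n - (GenContFract.of v).dens n * v|
      = (GenContFract.of v).dens n *
          |v - (GenContFract.of v).nums n / (GenContFract.of v).dens n| := by
        rw [abs_sub_comm, ← mul_div_cancel₀ ((GenContFract.of v).nums n) dens_pos.ne', ← mul_sub,
          abs_mul, abs_of_pos dens_pos, mul_div_cancel₀ _ dens_pos.ne']
    _ ≤ (GenContFract.of v).dens n *
          (1 / ((GenContFract.of v).dens n * (GenContFract.of v).dens (n + 1))) := by
        gcongr
    _ = 1 / (GenContFract.of v).dens (n + 1) := by field_simp

lemma abs_nums_sub_dens_mul_of_le_one_div_dens (v : K) (n : ℕ) :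
    |(GenContFract.of v).nums n - (GenContFract.of v).dens n * v| ≤
      1 / (GenContFract.of v).dens n :=
  (abs_nums_sub_dens_mul_of_le_one_div_dens_succ v n).trans <|
    one_div_le_one_div_of_le (one_pos.trans_le (one_le_dens_of v n)) GenContFract.of_den_mono

lemma nums_of_pos {v : K} (hv : 1 < v) (n : ℕ) : 0 < (GenContFract.of v).nums n := by
  have one_le_dens := one_le_dens_of v n
  have error_le_one : |(GenContFract.of v).nums n - (GenContFract.of v).dens n * v| ≤ 1 :=
    (abs_nums_sub_dens_mul_of_le_one_div_dens v n).trans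
      (div_le_one_of_le₀ one_le_dens (zero_le_one.trans one_le_dens))
  have one_lt_dens_mul : 1 < (GenContFract.of v).dens n * v :=
    one_lt_mul_of_le_of_lt one_le_dens hv
  linarith [(abs_le.mp error_le_one).1]

end ContinuedFraction

lemma exists_sq_eq_two_pow_padicValNat_mul {m : ℕ} (hm : m ≠ 0) :
    ∃ k : ℕ, m ^ 2 = 2 ^ (2 * padicValNat 2 m) * (4 * k + 1) := by
  obtain ⟨r, hr⟩ : 2 ^ padicValNat 2 m ∣ m := pow_padicValNat_dvd
  have r_odd : Odd r := by
    rw [← Nat.not_even_iff_odd, even_iff_two_dvd]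
    intro two_dvd
    apply pow_succ_padicValNat_not_dvd (p := 2) hm
    rw [pow_succ]
    exact (mul_dvd_mul_left _ two_dvd).trans hr.symm.dvd
  obtain ⟨j, rfl⟩ := r_odd
  refine ⟨j ^ 2 + j, ?_⟩
  calc m ^ 2 = (2 ^ padicValNat 2 m * (2 * j + 1)) ^ 2 := congrArg (· ^ 2) hr
    _ = 2 ^ (2 * padicValNat 2 m) * (4 * (j ^ 2 + j) + 1) := by ring

lemma abs_sin_le_abs_sub_int_mul_pi (x : ℝ) (n : ℤ) : |sin x| ≤ |x - n * π| := by
  calc |sin x| = |sin (x - n * π)| := by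
        rw [sin_sub_int_mul_pi, abs_mul, abs_neg_one_zpow, one_mul]
    _ ≤ |x - n * π| := abs_sin_le_abs

lemma abs_cos_add_pi_div_two_add_int_mul_pi (x : ℝ) (n : ℤ) :
    |cos (x + π / 2 + n * π)| = |sin x| := by
  rw [cos_add_int_mul_pi, abs_mul, abs_neg_one_zpow, one_mul, cos_add_pi_div_two, abs_neg]

lemma abs_cos_shift_eq_abs_sin {D : ℝ} (hD : D ≠ 0) {m k : ℤ}
    (h : 4 * (m : ℝ) ^ 2 = D * (4 * k + 1)) :
    |cos ((2 * ((D + 1) / D * π * m) + 1) * m)| = |sin m| := by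
  have sq_div : (m : ℝ) ^ 2 / D = k + 1 / 4 := by
    field_simp
    linear_combination h
  have shift_eq : (2 * ((D + 1) / D * π * m) + 1) * m =
      m + π / 2 + ((2 * (m ^ 2 + k) : ℤ) : ℝ) * π := by
    rw [add_div, div_self hD]
    push_cast
    linear_combination 2 * π * sq_div
  rw [shift_eq, abs_cos_add_pi_div_two_add_int_mul_pi]

lemma abs_cos_padic_shift_eq_abs_sin {m : ℕ} (hm : m ≠ 0) :
    |cos ((2 * ((2 ^ (2 + 2 * padicValNat 2 m) + 1) / 2 ^ (2 + 2 * padicValNat 2 m) * π * m) + 1)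
      * m)| = |sin m| := by
  obtain ⟨k, hk⟩ := exists_sq_eq_two_pow_padicValNat_mul hm
  have sq_eq : (m : ℝ) ^ 2 = 2 ^ (2 * padicValNat 2 m) * (4 * k + 1) := mod_cast hk
  refine abs_cos_shift_eq_abs_sin (m := m) (k := k) (by positivity) ?_
  push_cast
  rw [sq_eq, pow_add]
  ring

/-- Let `p n / q n` be the `n`-th continued fraction convergent of `π`, let
`v₂ = v₂(p n)` be the 2-adic valuation of `p n`, and set
`x n = ((2^(2+2v₂) + 1)/2^(2+2v₂))·π·(p n)`.  Then there is a constant `c > 0`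
such that `|cos((2·x n + 1)·p n)| ≤ c / q n` for all `n ≥ 1`. -/
theorem abs_cos_shift_le_div_den
    (p q : ℕ → ℕ)
    (hp : ∀ n, (p n : ℝ) = (GenContFract.of (π : ℝ)).nums n)
    (hq : ∀ n, (q n : ℝ) = (GenContFract.of (π : ℝ)).dens n)
    (x : ℕ → ℝ)
    (hx : ∀ n, x n =
      ((2 ^ (2 + 2 * padicValNat 2 (p n)) + 1 : ℝ) /
        (2 ^ (2 + 2 * padicValNat 2 (p n)) : ℝ)) * π * (p n : ℝ)) :
    ∃ c : ℝ, 0 < c ∧ ∀ n : ℕ, 1 ≤ n →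
      |Real.cos ((2 * x n + 1) * (p n : ℝ))| ≤ c / (q n : ℝ) := by
  refine ⟨1, one_pos, fun n _ => ?_⟩
  have p_ne_zero : p n ≠ 0 := by
    have num_pos := nums_of_pos (one_lt_two.trans_le two_le_pi) n
    rw [← hp] at num_pos
    exact_mod_cast num_pos.ne'
  calc |cos ((2 * x n + 1) * p n)| = |sin (p n)| := by
        rw [hx, abs_cos_padic_shift_eq_abs_sin p_ne_zero]
    _ ≤ |(p n : ℝ) - q n * π| := mod_cast abs_sin_le_abs_sub_int_mul_pi (p n) (q n)
    _ ≤ 1 / q n := by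
        rw [hp, hq]
        exact abs_nums_sub_dens_mul_of_le_one_div_dens π n
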